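/- arXiv:2002.05240 — 2 statements merged into one kernel-verified Lean document; each statement's English description precedes it below -/
import Mathlib

section
/- Fix an integer k ≥ 2, an integer n ≥ 1, and battlefield values v_1,…,v_n > 0 with V = Σ_{j=1}^n v_j. Suppose there is a partition function π : [n] → [k] such that Σ_{j ∈ π^{-1}(m)} v_j = V/k for every m ∈ [k]. Then there exists a probability measure μ on ℝ^n such that μ-almost surely every coordinate A_j is nonnegative and Σ_{j=1}^n A_j = 1, and for every j ∈ [n] and x ≥ 0, μ{A : A_j ≤ x} = min(1, (V·x/(k·v_j))^{1/(k-1)}). -/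
open MeasureTheory

/-!
Independent gamma variables `X`, `Y` of shapes `a`, `b` and equal rate satisfy
`(X / (X + Y), X + Y) ∼ Beta(a, b) ⊗ Gamma(a + b)`, by the change of variables
`(x, y) = (s u, s (1 - u))`. The second coordinate gives the additivity of gamma laws; the first
then shows that a Dirichlet vector `p` with parameters `α` has marginals
`p i ∼ Beta(α i, ∑ j, α j - α i)`. When all `k` parameters are `1 / (k - 1)`, the `k - 1` parameters
other than `α i` sum to `1`, and `Beta(a, 1)` has distribution function `x ^ a` on `[0, 1]`.
Splitting the share `p m` of each part among its battlefields in proportion to their values gives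
the coupling.
-/

open ProbabilityTheory
open scoped ENNReal

lemma lintegral_eq_ofReal_abs_mul_lintegral_mul_left {f : ℝ → ℝ≥0∞} (hf : Measurable f) {s : ℝ}
    (hs : s ≠ 0) : ∫⁻ x, f x = ENNReal.ofReal |s| * ∫⁻ u, f (s * u) := by
  conv_lhs => rw [← Real.smul_map_volume_mul_left hs]
  rw [lintegral_smul_measure, lintegral_map hf (by fun_prop), smul_eq_mul]

lemma lintegral_prod_eq_lintegral_fraction_total {F : ℝ × ℝ → ℝ≥0∞} (hF : Measurable F) :
    ∫⁻ p, F p = ∫⁻ q : ℝ × ℝ, ENNReal.ofReal |q.2| * F (q.2 * q.1, q.2 * (1 - q.1)) := by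
  rw [Measure.volume_eq_prod]
  calc ∫⁻ p, F p ∂volume.prod volume
      = ∫⁻ x, ∫⁻ y, F (x, y) := lintegral_prod _ hF.aemeasurable
    _ = ∫⁻ x, ∫⁻ s, F (x, s - x) :=
        lintegral_congr fun x ↦ (lintegral_sub_right_eq_self (fun y ↦ F (x, y)) x).symm
    _ = ∫⁻ s, ∫⁻ x, F (x, s - x) :=
        lintegral_lintegral_swap (f := fun x s ↦ F (x, s - x)) (by fun_prop)
    _ = ∫⁻ s, ∫⁻ u, ENNReal.ofReal |s| * F (s * u, s * (1 - u)) := by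
        refine lintegral_congr_ae ?_
        filter_upwards [Measure.ae_ne volume (0 : ℝ)] with s hs
        rw [lintegral_eq_ofReal_abs_mul_lintegral_mul_left (by fun_prop) hs,
          ← lintegral_const_mul _ (by fun_prop)]
        simp only [mul_one_sub]
    _ = ∫⁻ q : ℝ × ℝ, ENNReal.ofReal |q.2| * F (q.2 * q.1, q.2 * (1 - q.1))
          ∂volume.prod volume := by
        rw [lintegral_prod_symm _ (by fun_prop)]

@[fun_prop]
lemma measurable_gammaPDF (a r : ℝ) : Measurable (gammaPDF a r) :=
  (measurable_gammaPDFReal a r).ennreal_ofReal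

@[fun_prop]
lemma measurable_betaPDF (a b : ℝ) : Measurable (betaPDF a b) :=
  (measurable_betaPDFReal a b).ennreal_ofReal

lemma mul_gammaPDFReal_mul_gammaPDFReal {a b r : ℝ} (ha : 0 < a) (hb : 0 < b) (hr : 0 < r)
    {u s : ℝ} (hu0 : 0 < u) (hu1 : u < 1) (hs : 0 < s) :
    s * (gammaPDFReal a r (s * u) * gammaPDFReal b r (s * (1 - u))) =
      betaPDFReal a b u * gammaPDFReal (a + b) r s := by
  have hu1' : 0 < 1 - u := sub_pos.mpr hu1
  have hexp : Real.exp (-(r * s)) =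
      Real.exp (-(r * (s * u))) * Real.exp (-(r * (s * (1 - u)))) := by
    rw [← Real.exp_add]
    ring_nf
  have hspow : s ^ (a + b - 1) = s * (s ^ (a - 1) * s ^ (b - 1)) := by
    simp only [Real.rpow_sub_one hs.ne', Real.rpow_add hs]
    field_simp
  rw [gammaPDFReal, gammaPDFReal, gammaPDFReal, betaPDFReal, if_pos (by positivity),
    if_pos (by positivity), if_pos ⟨hu0, hu1⟩, if_pos hs.le, hexp, hspow, Real.rpow_add hr,
    Real.mul_rpow hs.le hu0.le, Real.mul_rpow hs.le hu1'.le, beta]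
  field_simp

lemma ofReal_abs_mul_gammaPDF_mul_gammaPDF {a b r : ℝ} (ha : 0 < a) (hb : 0 < b) (hr : 0 < r)
    {u s : ℝ} (hu0 : u ≠ 0) (hu1 : u ≠ 1) (hs : s ≠ 0) :
    ENNReal.ofReal |s| * (gammaPDF a r (s * u) * gammaPDF b r (s * (1 - u))) =
      betaPDF a b u * gammaPDF (a + b) r s := by
  rcases hs.lt_or_gt with hs | hs
  · rw [gammaPDF_of_neg hs, mul_zero]
    rcases hu0.lt_or_gt with hu0 | hu0
    · rw [gammaPDF_of_neg (x := s * (1 - u)) (by nlinarith), mul_zero, mul_zero]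
    · rw [gammaPDF_of_neg (x := s * u) (by nlinarith), zero_mul, mul_zero]
  rcases hu0.lt_or_gt with hu0 | hu0
  · rw [gammaPDF_of_neg (x := s * u) (by nlinarith), betaPDF_eq_zero_of_nonpos hu0.le, zero_mul,
      zero_mul, mul_zero]
  rcases hu1.lt_or_gt with hu1 | hu1
  · rw [gammaPDF, gammaPDF, gammaPDF, betaPDF, abs_of_pos hs,
      ← ENNReal.ofReal_mul (gammaPDFReal_nonneg ha hr _), ← ENNReal.ofReal_mul hs.le,
      ← ENNReal.ofReal_mul (betaPDFReal_pos hu0 hu1 ha hb).le,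
      mul_gammaPDFReal_mul_gammaPDFReal ha hb hr hu0 hu1 hs]
  · rw [gammaPDF_of_neg (x := s * (1 - u)) (by nlinarith), betaPDF_eq_zero_of_one_le hu1.le,
      mul_zero, mul_zero, zero_mul]

lemma map_fraction_total_gammaMeasure_prod {a b r : ℝ} (ha : 0 < a) (hb : 0 < b) (hr : 0 < r) :
    ((gammaMeasure a r).prod (gammaMeasure b r)).map (fun p ↦ (p.1 / (p.1 + p.2), p.1 + p.2)) =
      (betaMeasure a b).prod (gammaMeasure (a + b) r) := by
  refine Measure.ext_of_lintegral _ fun f hf ↦ ?_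
  rw [lintegral_map hf (by fun_prop), gammaMeasure, gammaMeasure, gammaMeasure, betaMeasure,
    prod_withDensity (by fun_prop) (by fun_prop), prod_withDensity (by fun_prop) (by fun_prop),
    lintegral_withDensity_eq_lintegral_mul _ (by fun_prop) (by fun_prop),
    lintegral_withDensity_eq_lintegral_mul _ (by fun_prop) hf, ← Measure.volume_eq_prod,
    lintegral_prod_eq_lintegral_fraction_total (by fun_prop)]
  refine lintegral_congr_ae ?_
  have hu (c : ℝ) : ∀ᵐ q : ℝ × ℝ, q.1 ≠ c :=
    Measure.quasiMeasurePreserving_fst.ae (Measure.ae_ne volume c)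
  have hs : ∀ᵐ q : ℝ × ℝ, q.2 ≠ 0 :=
    Measure.quasiMeasurePreserving_snd.ae (Measure.ae_ne volume 0)
  filter_upwards [hu 0, hu 1, hs] with ⟨u, s⟩ hu0 hu1 hs
  have htotal : s * u + s * (1 - u) = s := by ring
  simp only [Pi.mul_apply, htotal, mul_div_cancel_left₀ u hs]
  rw [← mul_assoc, ofReal_abs_mul_gammaPDF_mul_gammaPDF ha hb hr hu0 hu1 hs]

section

variable {Ω : Type*} {mΩ : MeasurableSpace Ω} {P : Measure Ω} {r : ℝ}

lemma hasLaw_fraction_total_of_indepFun {X Y : Ω → ℝ} {a b : ℝ} (ha : 0 < a) (hb : 0 < b)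
    (hr : 0 < r) (hX : HasLaw X (gammaMeasure a r) P) (hY : HasLaw Y (gammaMeasure b r) P)
    (hXY : IndepFun X Y P) :
    HasLaw (fun ω ↦ (X ω / (X ω + Y ω), X ω + Y ω))
      ((betaMeasure a b).prod (gammaMeasure (a + b) r)) P := by
  have := isProbabilityMeasure_gammaMeasure ha hr
  have := hX.isProbabilityMeasure
  exact HasLaw.fun_comp ⟨by fun_prop, map_fraction_total_gammaMeasure_prod ha hb hr⟩
    (hXY.hasLaw_prod hX hY)

lemma hasLaw_add_gammaMeasure {X Y : Ω → ℝ} {a b : ℝ} (ha : 0 < a) (hb : 0 < b) (hr : 0 < r)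
    (hX : HasLaw X (gammaMeasure a r) P) (hY : HasLaw Y (gammaMeasure b r) P)
    (hXY : IndepFun X Y P) : HasLaw (X + Y) (gammaMeasure (a + b) r) P := by
  have := isProbabilityMeasureBeta ha hb
  have := isProbabilityMeasure_gammaMeasure (add_pos ha hb) hr
  exact measurePreserving_snd.fun_comp_hasLaw (hasLaw_fraction_total_of_indepFun ha hb hr hX hY hXY)

lemma hasLaw_div_add_betaMeasure {X Y : Ω → ℝ} {a b : ℝ} (ha : 0 < a) (hb : 0 < b) (hr : 0 < r)
    (hX : HasLaw X (gammaMeasure a r) P) (hY : HasLaw Y (gammaMeasure b r) P)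
    (hXY : IndepFun X Y P) : HasLaw (X / (X + Y)) (betaMeasure a b) P := by
  have := isProbabilityMeasureBeta ha hb
  have := isProbabilityMeasure_gammaMeasure (add_pos ha hb) hr
  exact measurePreserving_fst.fun_comp_hasLaw (hasLaw_fraction_total_of_indepFun ha hb hr hX hY hXY)

lemma hasLaw_sum_gammaMeasure {ι : Type*} {X : ι → Ω → ℝ} {α : ι → ℝ} (hα : ∀ i, 0 < α i)
    (hr : 0 < r) (hX : ∀ i, HasLaw (X i) (gammaMeasure (α i) r) P) (hindep : iIndepFun X P)
    {s : Finset ι} (hs : s.Nonempty) :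
    HasLaw (∑ i ∈ s, X i) (gammaMeasure (∑ i ∈ s, α i) r) P := by
  induction hs using Finset.Nonempty.cons_induction with
  | singleton i => simpa only [Finset.sum_singleton] using hX i
  | cons i s hi hs ih =>
    rw [Finset.sum_cons, Finset.sum_cons]
    exact hasLaw_add_gammaMeasure (hα i) (Finset.sum_pos (fun j _ ↦ hα j) hs) hr (hX i) ih
      (hindep.indepFun_finsetSum_of_notMem₀ (fun j ↦ (hX j).aemeasurable) hi).symm

end

lemma ae_pos_gammaMeasure (a r : ℝ) : ∀ᵐ x ∂gammaMeasure a r, 0 < x := by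
  rw [gammaMeasure, ae_withDensity_iff (measurable_gammaPDF a r)]
  filter_upwards [Measure.ae_ne volume (0 : ℝ)] with x hx0 hpdf
  by_contra! hx
  exact hpdf (gammaPDF_of_neg (hx.lt_of_ne hx0))

lemma betaPDF_one_right {a : ℝ} (ha : 0 < a) :
    betaPDF a 1 = (Set.Ioo 0 1).indicator fun x ↦ ENNReal.ofReal (a * x ^ (a - 1)) := by
  have hbeta : 1 / beta a 1 = a := by
    rw [beta, Real.Gamma_one, mul_one, Real.Gamma_add_one ha.ne']
    field_simp [(Real.Gamma_pos_of_pos ha).ne']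
  ext x
  simp only [betaPDF_eq, hbeta, sub_self, Real.rpow_zero, mul_one, Set.indicator_apply,
    Set.mem_Ioo, apply_ite ENNReal.ofReal, ENNReal.ofReal_zero]

lemma betaMeasure_one_right_Iic {a x : ℝ} (ha : 0 < a) (hx : 0 ≤ x) :
    betaMeasure a 1 (Set.Iic x) = ENNReal.ofReal (min 1 (x ^ a)) := by
  set y := min 1 x
  have hy : 0 ≤ y := le_min zero_le_one hx
  have hya : y ^ a = min 1 (x ^ a) := by
    rcases le_total 1 x with h | h
    · simp only [y, min_eq_left h, min_eq_left (Real.one_le_rpow h ha.le), Real.one_rpow]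
    · simp only [y, min_eq_right h, min_eq_right (Real.rpow_le_one hx h ha.le)]
  have hint : IntervalIntegrable (fun u ↦ a * u ^ (a - 1)) volume 0 y :=
    (intervalIntegral.intervalIntegrable_rpow' (by linarith)).const_mul a
  calc betaMeasure a 1 (Set.Iic x)
      = ∫⁻ u in Set.Ioo 0 1 ∩ Set.Iic x, ENNReal.ofReal (a * u ^ (a - 1)) := by
        rw [betaMeasure, withDensity_apply _ measurableSet_Iic, betaPDF_one_right ha,
          setLIntegral_indicator measurableSet_Ioo]
    _ = ∫⁻ u in Set.Ioc 0 y, ENNReal.ofReal (a * u ^ (a - 1)) := by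
        rw [← Set.Ioc_inter_Iic]
        exact setLIntegral_congr (Ioo_ae_eq_Ioc.inter (ae_eq_refl _))
    _ = ENNReal.ofReal (∫ u in 0..y, a * u ^ (a - 1)) := by
        rw [intervalIntegral.integral_of_le hy,
          ofReal_integral_eq_lintegral_ofReal
            ((intervalIntegrable_iff_integrableOn_Ioc_of_le hy).mp hint)]
        filter_upwards [ae_restrict_mem measurableSet_Ioc] with u hu
        have := hu.1
        positivity
    _ = ENNReal.ofReal (min 1 (x ^ a)) := by
        rw [intervalIntegral.integral_const_mul, integral_rpow (.inl (by linarith)),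
          sub_add_cancel, Real.zero_rpow ha.ne', sub_zero, mul_div_cancel₀ _ ha.ne', hya]

/-- The Dirichlet distribution with parameters `α`, encoded as the law of a vector of independent
gamma variables with shapes `α i` and rate `1`, divided by its sum. -/
noncomputable def dirichletMeasure {ι : Type*} [Fintype ι] (α : ι → ℝ) : Measure (ι → ℝ) :=
  (Measure.pi fun i ↦ gammaMeasure (α i) 1).map fun ω i ↦ ω i / ∑ j, ω j

section Dirichlet

variable {ι : Type*} [Fintype ι] {α : ι → ℝ}

lemma isProbabilityMeasure_dirichletMeasure (hα : ∀ i, 0 < α i) :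
    IsProbabilityMeasure (dirichletMeasure α) := by
  have (i : ι) := isProbabilityMeasure_gammaMeasure (hα i) one_pos
  exact Measure.isProbabilityMeasure_map (by fun_prop)

lemma ae_dirichletMeasure_mem_stdSimplex [Nonempty ι] (hα : ∀ i, 0 < α i) :
    ∀ᵐ p ∂dirichletMeasure α, p ∈ stdSimplex ℝ ι := by
  have (i : ι) := isProbabilityMeasure_gammaMeasure (hα i) one_pos
  rw [dirichletMeasure, ae_map_iff (p := (· ∈ stdSimplex ℝ ι)) (by fun_prop)
    (isClosed_stdSimplex ℝ ι).measurableSet]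
  have hpos : ∀ᵐ ω ∂Measure.pi fun i ↦ gammaMeasure (α i) 1, ∀ i, 0 < ω i :=
    ae_all_iff.mpr fun i ↦
      (Measure.quasiMeasurePreserving_eval _ i).ae (ae_pos_gammaMeasure (α i) 1)
  filter_upwards [hpos] with ω hω
  have hsum : 0 < ∑ i, ω i := Finset.sum_pos (fun i _ ↦ hω i) Finset.univ_nonempty
  exact ⟨fun i ↦ (div_pos (hω i) hsum).le, by rw [← Finset.sum_div, div_self hsum.ne']⟩

lemma hasLaw_eval_dirichletMeasure [Nontrivial ι] (hα : ∀ i, 0 < α i) (i : ι) :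
    HasLaw (fun p ↦ p i) (betaMeasure (α i) (∑ j, α j - α i)) (dirichletMeasure α) := by
  classical
  have (i : ι) := isProbabilityMeasure_gammaMeasure (hα i) one_pos
  let P := Measure.pi fun i ↦ gammaMeasure (α i) 1
  have hlaw (j : ι) : HasLaw (fun ω : ι → ℝ ↦ ω j) (gammaMeasure (α j) 1) P :=
    (measurePreserving_eval (fun i ↦ gammaMeasure (α i) 1) j).hasLaw
  have hindep : iIndepFun (fun (j : ι) (ω : ι → ℝ) ↦ ω j) P :=
    iIndepFun_pi (X := fun _ ↦ id) fun _ ↦ aemeasurable_id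
  have hne : (Finset.univ.erase i).Nonempty := Finset.univ_nontrivial.erase_nonempty
  have hratio := hasLaw_div_add_betaMeasure (hα i) (Finset.sum_pos (fun j _ ↦ hα j) hne) one_pos
    (hlaw i) (hasLaw_sum_gammaMeasure hα one_pos hlaw hindep hne)
    (hindep.indepFun_finsetSum_of_notMem (fun j ↦ by fun_prop) (Finset.notMem_erase i _)).symm
  rw [Finset.add_sum_erase _ (fun (j : ι) (ω : ι → ℝ) ↦ ω j) (Finset.mem_univ i),
    Finset.sum_erase_eq_sub (Finset.mem_univ i)] at hratio
  refine ⟨(measurable_pi_apply i).aemeasurable, ?_⟩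
  rw [dirichletMeasure, Measure.map_map (by fun_prop) (by fun_prop), ← hratio.map_eq]
  congr 1 with ω
  simp only [Function.comp_apply, Pi.div_apply, Finset.sum_apply]

lemma dirichletMeasure_one_div_card_sub_one_setOf_apply_le [Nontrivial ι] (i : ι) {x : ℝ}
    (hx : 0 ≤ x) :
    dirichletMeasure (fun _ : ι ↦ 1 / ((Fintype.card ι : ℝ) - 1)) {p | p i ≤ x} =
      ENNReal.ofReal (min 1 (x ^ (1 / ((Fintype.card ι : ℝ) - 1)))) := by
  have hcard : 0 < (Fintype.card ι : ℝ) - 1 :=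
    sub_pos.mpr (Nat.one_lt_cast.mpr Fintype.one_lt_card)
  have hα : 0 < 1 / ((Fintype.card ι : ℝ) - 1) := one_div_pos.mpr hcard
  have hlaw := hasLaw_eval_dirichletMeasure (fun _ ↦ hα) i
  have hrest : ∑ _ : ι, 1 / ((Fintype.card ι : ℝ) - 1) - 1 / ((Fintype.card ι : ℝ) - 1) = 1 := by
    rw [Finset.sum_const, Finset.card_univ, nsmul_eq_mul]
    field_simp
  rw [hrest] at hlaw
  rw [hlaw.measure_eq measurableSet_Iic]
  exact betaMeasure_one_right_Iic hα hx

end Dirichlet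

lemma hasSum_comp_mul_of_hasSum_fiber {ι κ R : Type*} [Fintype κ] [NonUnitalNonAssocSemiring R]
    [TopologicalSpace R] [IsTopologicalSemiring R] {v : ι → R} {part : ι → κ} {w : κ → R}
    (h : ∀ m, HasSum (fun j : part ⁻¹' {m} ↦ v j) (w m)) (c : κ → R) :
    HasSum (fun j ↦ c (part j) * v j) (∑ m, c m * w m) := by
  classical
  have hsum := hasSum_sum (s := Finset.univ) fun m _ ↦
    (hasSum_subtype_iff_indicator.mp (h m)).mul_left (c m)
  simpa [Set.indicator_apply] using hsum

lemma measurableSet_setOf_hasSum {ι M : Type*} [Countable ι] [AddCommMonoid M]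
    [TopologicalSpace M] [FirstCountableTopology M] [MeasurableSpace M] [OpensMeasurableSpace M]
    [MeasurableAdd₂ M] (a : M) : MeasurableSet {f : ι → M | HasSum f a} := by
  simp only [HasSum, SummationFilter.unconditional_filter]
  exact measurableSet_tendsto _ fun s ↦ by fun_prop

theorem stmt3_general {ι κ : Type*} [Fintype κ] [Nontrivial κ] {v : ι → ℝ} (hv : ∀ j, 0 < v j)
    {part : ι → κ} {w : κ → ℝ} (hw : ∀ m, 0 < w m)
    (hpart : ∀ m, HasSum (fun j : part ⁻¹' {m} ↦ v j) (w m)) :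
    ∃ μ : Measure (ι → ℝ), IsProbabilityMeasure μ ∧
      (∀ᵐ A ∂μ, (∀ j, 0 ≤ A j) ∧ HasSum A 1) ∧
      ∀ j x, 0 ≤ x → μ {A | A j ≤ x} = ENNReal.ofReal (min 1
        ((w (part j) * x / v j) ^ (1 / ((Fintype.card κ : ℝ) - 1)))) := by
  have hα (_ : κ) : 0 < 1 / ((Fintype.card κ : ℝ) - 1) :=
    one_div_pos.mpr (sub_pos.mpr (Nat.one_lt_cast.mpr Fintype.one_lt_card))
  have := isProbabilityMeasure_dirichletMeasure hα
  have : Countable ι := by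
    have hsupp : Function.support v = Set.univ := Set.eq_univ_of_forall fun j ↦ (hv j).ne'
    have hsum := hasSum_comp_mul_of_hasSum_fiber hpart 1
    simp only [Pi.one_apply, one_mul] at hsum
    exact Set.countable_univ_iff.mp (hsupp ▸ hsum.summable.countable_support)
  let split (p : κ → ℝ) (j : ι) : ℝ := p (part j) / w (part j) * v j
  have hsplit : Measurable split := by fun_prop
  refine ⟨(dirichletMeasure fun _ : κ ↦ 1 / ((Fintype.card κ : ℝ) - 1)).map split,
    Measure.isProbabilityMeasure_map hsplit.aemeasurable, ?_, fun j x hx ↦ ?_⟩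
  · have hmeas : MeasurableSet {A : ι → ℝ | (∀ j, 0 ≤ A j) ∧ HasSum A 1} :=
      measurableSet_Ici.inter (measurableSet_setOf_hasSum 1)
    rw [ae_map_iff hsplit.aemeasurable hmeas]
    filter_upwards [ae_dirichletMeasure_mem_stdSimplex hα] with p ⟨hp, hp1⟩
    refine ⟨fun j ↦ mul_nonneg (div_nonneg (hp _) (hw _).le) (hv j).le, ?_⟩
    have hsum := hasSum_comp_mul_of_hasSum_fiber hpart fun m ↦ p m / w m
    simpa only [div_mul_cancel₀ _ (hw _).ne', hp1] using hsum
  · have hpre : split ⁻¹' {A | A j ≤ x} = {p | p (part j) ≤ w (part j) * x / v j} := by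
      ext p
      simp only [Set.mem_preimage, Set.mem_ofPred_eq, split]
      rw [← le_div_iff₀ (hv j), div_le_iff₀' (hw _), mul_div_assoc]
    rw [Measure.map_apply hsplit (measurableSet_le (by fun_prop) (by fun_prop)), hpre]
    exact dirichletMeasure_one_div_card_sub_one_setOf_apply_le _
      (div_nonneg (mul_nonneg (hw _).le hx) (hv j).le)

theorem stmt3 (k n : ℕ) (hk : 2 ≤ k) (hn : 1 ≤ n) (v : Fin n → ℝ) (hv : ∀ j, 0 < v j)
    (part : Fin n → Fin k)
    (hpart : ∀ m : Fin k,
      ∑ j ∈ Finset.univ.filter (fun j => part j = m), v j = (∑ l, v l) / k) :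
    ∃ μ : Measure (Fin n → ℝ), IsProbabilityMeasure μ ∧
      (∀ᵐ A ∂μ, (∀ j, 0 ≤ A j) ∧ ∑ j, A j = 1) ∧
      (∀ j, ∀ x : ℝ, 0 ≤ x →
        μ {A : Fin n → ℝ | A j ≤ x} =
          ENNReal.ofReal (min 1
            (((∑ l, v l) * x / ((k : ℝ) * v j)) ^ ((1 : ℝ) / ((k : ℝ) - 1))))) := by
  have : Nonempty (Fin n) := ⟨⟨0, hn⟩⟩
  have : Nontrivial (Fin k) := Fin.nontrivial_iff_two_le.mpr hk
  have hw (_ : Fin k) : 0 < (∑ l, v l) / k :=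
    div_pos (Finset.sum_pos (fun l _ ↦ hv l) Finset.univ_nonempty) (by positivity)
  have hfiber (m : Fin k) : HasSum (fun j : part ⁻¹' {m} ↦ v j) ((∑ l, v l) / k) := by
    rw [← hpart m, Finset.sum_subtype (p := (part · = m)) _ (by simp)]
    exact hasSum_fintype fun j : {j // part j = m} ↦ v j
  obtain ⟨μ, hμ, hsimplex, hcdf⟩ := stmt3_general hv hw hfiber
  refine ⟨μ, hμ, hsimplex.mono fun A hA ↦ ⟨hA.1, (hasSum_fintype A).unique hA.2⟩, fun j x hx ↦ ?_⟩
  rw [hcdf j x hx, Fintype.card_fin, div_mul_eq_mul_div, div_div]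
end

section
/- Fix an integer n ≥ 3 and battlefield values v_1,…,v_n > 0 with V = Σ_{j=1}^n v_j, and suppose v_j ≤ V/3 for every j ∈ [n]. Then there exists a probability measure μ on ℝ^n such that: (i) μ-almost surely every coordinate A_j is nonnegative and Σ_{j=1}^n A_j = 1; (ii) for every j ∈ [n] and x ≥ 0, μ{A : A_j ≤ x} = min(1, √(V·x/(3·v_j))); and (iii) if all 3 players of the 3-player Colonel Blotto game with unit budgets independently sample their bid vectors from μ, they are in Nash equilibrium: for every probability measure ν on ℝ^n that is almost surely nonnegative with coordinate sum at most 1, the expected payoff of a single player drawing from ν while the other 2 players draw independently from μ is at most V/3, which is the expected payoff each player receives under symmetric play of μ. -/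
open MeasureTheory

open Classical in
/-- Colonel Blotto payoff: each battlefield's value is split evenly among
the players tied for the highest bid on it. -/
noncomputable def blottoPayoff {k n : ℕ} (v : Fin n → ℝ) (A : Fin k → Fin n → ℝ)
    (i : Fin k) : ℝ :=
  ∑ j, if ∀ i', A i' j ≤ A i j then
      v j / ((Finset.univ.filter fun i' : Fin k => ∀ i'', A i'' j ≤ A i' j).card : ℝ)
    else 0

/-- The strategy profile where player `i₀` plays `ν` and everyone else plays `μ`. -/
noncomputable def devFamily {α : Type*} [MeasurableSpace α] {k : ℕ} (i₀ : Fin k)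
    (μ ν : Measure α) : Fin k → Measure α :=
  fun i => if i = i₀ then ν else μ

theorem devFamily_prob {α : Type*} [MeasurableSpace α] {k : ℕ} (i₀ : Fin k)
    (μ ν : Measure α) (hμ : IsProbabilityMeasure μ) (hν : IsProbabilityMeasure ν) :
    ∀ i, IsProbabilityMeasure (devFamily i₀ μ ν i) := by
  intro i
  unfold devFamily
  split <;> assumption

/-- Expected payoff of player `i` when each player `i'` independently samples its
bid vector from `P i'`. -/
noncomputable def expectedPayoff {k n : ℕ} (v : Fin n → ℝ)
    (P : Fin k → Measure (Fin n → ℝ)) (hP : ∀ i, IsProbabilityMeasure (P i))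
    (i : Fin k) : ℝ :=
  haveI := hP
  ∫ A, blottoPayoff v A i ∂(Measure.pi P)

/-! Give battlefield `j` the weight `w j = 3 * v j / V`. The weights are at most `1` and add up to
`3`, which is exactly what it takes for a Parseval frame `f` of `ℝ³` with `‖f j‖ ^ 2 = w j` to
exist: starting from an orthonormal basis padded with zeros, rotating two vectors of the family
within their pair changes two of the squared lengths at a time, and such exchanges reach every `w`.

Bidding `⟪f j, u⟫ ^ 2` on battlefield `j` for a uniformly distributed direction `u` spends
`‖u‖ ^ 2 = 1`. By Archimedes' hat-box theorem `|⟪f j, u⟫| / ‖f j‖` is uniform on `[0, 1]`, so a bid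
`x` on battlefield `j` beats one such opponent with probability `√(x / w j)` (for `x ≤ w j`), and
two of them with probability `x / w j`. A deviation therefore gains at most
`v j * (x / w j) = V / 3 * x` on battlefield `j`, which is linear in `x` with the same slope
everywhere, so a unit budget never earns more than `V / 3`. In symmetric play everyone earns `V / 3`
by exchangeability of the players.
-/

theorem sum_eq_sum_of_pair {ι M : Type*} [Fintype ι] [AddCommMonoid M] {f g : ι → M} {a b : ι}
    (hab : a ≠ b) (hpair : f a + f b = g a + g b) (hoff : ∀ j, j ≠ a → j ≠ b → f j = g j) :
    ∑ j, f j = ∑ j, g j := by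
  classical
  rw [← Finset.sum_add_sum_compl {a, b} f, ← Finset.sum_add_sum_compl {a, b} g,
    Finset.sum_pair hab, Finset.sum_pair hab, hpair]
  congr 1
  refine Finset.sum_congr rfl fun j hj => ?_
  simp only [Finset.mem_compl, Finset.mem_insert, Finset.mem_singleton, not_or] at hj
  exact hoff j hj.1 hj.2

/-- `w` arises from `w'` by a T-transform (Hardy, Littlewood and Pólya) at the coordinates `a` and
`b`: these two coordinates move towards each other, or past each other within the interval they
span, while their sum and all other coordinates stay fixed. -/
structure IsTTransform {ι : Type*} (w' w : ι → ℝ) (a b : ι) : Prop where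
  ne : a ≠ b
  mem_uIcc : w a ∈ Set.uIcc (w' a) (w' b)
  add_eq : w a + w b = w' a + w' b
  eq_of_ne : ∀ j, j ≠ a → j ≠ b → w j = w' j

theorem IsTTransform.sum_eq {ι : Type*} [Fintype ι] {w' w : ι → ℝ} {a b : ι}
    (h : IsTTransform w' w a b) : ∑ j, w j = ∑ j, w' j :=
  sum_eq_sum_of_pair h.ne h.add_eq h.eq_of_ne

theorem exists_mem_Icc_add_eq {x y : ℝ} (hx : x ∈ Set.Icc (0 : ℝ) 1) (hy : y ∈ Set.Icc (0 : ℝ) 1) :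
    ∃ p ∈ Set.Icc (0 : ℝ) 1, ∃ q ∈ Set.Icc (0 : ℝ) 1,
      p ∉ Set.Ioo (0 : ℝ) 1 ∧ x + y = p + q ∧ x ∈ Set.uIcc p q := by
  obtain ⟨hx0, hx1⟩ := hx
  obtain ⟨hy0, hy1⟩ := hy
  rcases le_total (x + y) 1 with h | h
  · exact ⟨0, by simp, x + y, ⟨by linarith, h⟩, by simp, by ring,
      Set.mem_uIcc_of_le hx0 (by linarith)⟩
  · exact ⟨1, by simp, x + y - 1, ⟨by linarith, by linarith⟩, by simp, by ring,
      Set.mem_uIcc_of_ge (by linarith) hx1⟩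

theorem exists_isTTransform_notMem_Ioo {ι : Type*} {w : ι → ℝ}
    (hw : ∀ j, w j ∈ Set.Icc (0 : ℝ) 1) {a b : ι} (hab : a ≠ b) :
    ∃ w', IsTTransform w' w a b ∧ (∀ j, w' j ∈ Set.Icc (0 : ℝ) 1) ∧ w' a ∉ Set.Ioo (0 : ℝ) 1 := by
  classical
  obtain ⟨p, hp, q, hq, hp01, hadd, hmem⟩ := exists_mem_Icc_add_eq (hw a) (hw b)
  let w' := Function.update (Function.update w a p) b q
  have hwa : w' a = p := by simp [w', hab]
  have hwb : w' b = q := by simp [w']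
  refine ⟨w', ⟨hab, by rwa [hwa, hwb], by rwa [hwa, hwb], fun j ha hb => by simp [w', ha, hb]⟩,
    fun j => ?_, by rwa [hwa]⟩
  simp only [w', Function.update_apply]
  split_ifs
  exacts [hq, hp, hw j]

theorem exists_ne_mem_Ioo_of_sum_eq_intCast {ι : Type*} [Fintype ι] {w : ι → ℝ} {m : ℤ}
    (hw : ∀ j, w j ∈ Set.Icc (0 : ℝ) 1) (hs : ∑ j, w j = m) {a : ι}
    (ha : w a ∈ Set.Ioo (0 : ℝ) 1) : ∃ b, a ≠ b ∧ w b ∈ Set.Ioo (0 : ℝ) 1 := by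
  classical
  by_contra! hb
  have hfloor : ∀ j ∈ Finset.univ.erase a, w j = (⌊w j⌋ : ℤ) := fun j hj => by
    rcases Set.eq_endpoints_or_mem_Ioo_of_mem_Icc (hw j) with h | h | h
    · simp [h]
    · simp [h]
    · exact absurd h (hb j (Finset.ne_of_mem_erase hj).symm)
  have hwa : w a = (m - ∑ j ∈ Finset.univ.erase a, ⌊w j⌋ : ℤ) := by
    push_cast
    rw [← hs, ← Finset.add_sum_erase _ _ (Finset.mem_univ a), Finset.sum_congr rfl hfloor,
      add_sub_cancel_right]
  obtain ⟨h0, h1⟩ := hwa ▸ ha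
  norm_cast at h0 h1
  omega

theorem isTTransform_induction {ι : Type*} [Fintype ι] {P : (ι → ℝ) → Prop} {m : ℤ}
    (vertex : ∀ w : ι → ℝ, (∀ j, w j = 0 ∨ w j = 1) → ∑ j, w j = m → P w)
    (transform : ∀ w' w a b, IsTTransform w' w a b → P w' → P w) (w : ι → ℝ)
    (hw : ∀ j, w j ∈ Set.Icc (0 : ℝ) 1) (hs : ∑ j, w j = m) : P w := by
  classical
  induction hF : Finset.univ.filter (fun j => w j ∈ Set.Ioo (0 : ℝ) 1)
    using Finset.strongInduction generalizing w with
  | H F ih =>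
  subst hF
  by_cases hfrac : ∃ a, w a ∈ Set.Ioo (0 : ℝ) 1
  · obtain ⟨a, ha⟩ := hfrac
    obtain ⟨b, hab, hb⟩ := exists_ne_mem_Ioo_of_sum_eq_intCast hw hs ha
    obtain ⟨w', hw'w, hw', hw'a⟩ := exists_isTTransform_notMem_Ioo hw hab
    refine transform w' w a b hw'w (ih _ ?_ w' hw' (hw'w.sum_eq ▸ hs) rfl)
    rw [Finset.ssubset_iff_of_subset fun j hj => ?_]
    · exact ⟨a, by simpa using ha, by simpa using hw'a⟩
    · rw [Finset.mem_filter_univ] at hj ⊢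
      rcases eq_or_ne j a with rfl | hja
      · exact absurd hj hw'a
      rcases eq_or_ne j b with rfl | hjb
      · exact hb
      rwa [hw'w.eq_of_ne j hja hjb]
  · refine vertex w (fun j => ?_) hs
    rcases Set.eq_endpoints_or_mem_Ioo_of_mem_Icc (hw j) with h | h | h
    exacts [Or.inl h, Or.inr h, absurd ⟨j, h⟩ hfrac]

section ParsevalFrame

variable {ι E : Type*} [NormedAddCommGroup E] [InnerProductSpace ℝ E]

/-- A finite family `f` is a Parseval frame when `∑ j, ⟪f j, x⟫ ^ 2 = ‖x‖ ^ 2` for every `x`. -/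
def IsParsevalFrame [Fintype ι] (f : ι → E) : Prop :=
  ∀ x, ∑ j, inner ℝ (f j) x ^ 2 = ‖x‖ ^ 2

open Classical in
/-- Rotation of the pair of vectors `(f a, f b)` by the angle `θ`, the coordinates of this pair
being mixed while the other vectors of `f` are kept. It transports length from `f a` to `f b`
without affecting the Parseval property. -/
noncomputable def rotatePair (f : ι → E) (a b : ι) (θ : ℝ) : ι → E :=
  Function.update (Function.update f a (Real.cos θ • f a + Real.sin θ • f b)) b
    (Real.cos θ • f b - Real.sin θ • f a)

variable (f : ι → E) {a b : ι} (θ : ℝ)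

theorem rotatePair_left (hab : a ≠ b) :
    rotatePair f a b θ a = Real.cos θ • f a + Real.sin θ • f b := by
  simp [rotatePair, hab]

theorem rotatePair_right : rotatePair f a b θ b = Real.cos θ • f b - Real.sin θ • f a := by
  simp [rotatePair]

theorem rotatePair_of_ne {j : ι} (ha : j ≠ a) (hb : j ≠ b) : rotatePair f a b θ j = f j := by
  simp [rotatePair, ha, hb]

theorem norm_sq_rotatePair_add (hab : a ≠ b) :
    ‖rotatePair f a b θ a‖ ^ 2 + ‖rotatePair f a b θ b‖ ^ 2 = ‖f a‖ ^ 2 + ‖f b‖ ^ 2 := by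
  rw [rotatePair_left f θ hab, rotatePair_right, norm_add_sq_real, norm_sub_sq_real]
  simp only [norm_smul, mul_pow, real_inner_smul_left, real_inner_smul_right, Real.norm_eq_abs,
    sq_abs, real_inner_comm (f a) (f b)]
  linear_combination (‖f a‖ ^ 2 + ‖f b‖ ^ 2) * Real.sin_sq_add_cos_sq θ

variable {f}

theorem IsParsevalFrame.rotatePair [Fintype ι] (hf : IsParsevalFrame f) (hab : a ≠ b) :
    IsParsevalFrame (rotatePair f a b θ) := by
  intro x
  rw [← hf x]
  refine sum_eq_sum_of_pair hab ?_ fun j ha hb => by rw [rotatePair_of_ne f θ ha hb]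
  rw [rotatePair_left f θ hab, rotatePair_right]
  simp only [inner_add_left, inner_sub_left, real_inner_smul_left]
  linear_combination
    (inner ℝ (f a) x ^ 2 + inner ℝ (f b) x ^ 2) * Real.sin_sq_add_cos_sq θ

theorem exists_norm_sq_rotatePair_eq (hab : a ≠ b) {p : ℝ}
    (hp : p ∈ Set.uIcc (‖f a‖ ^ 2) (‖f b‖ ^ 2)) : ∃ θ, ‖rotatePair f a b θ a‖ ^ 2 = p := by
  simp_rw [rotatePair_left f _ hab]
  obtain ⟨θ, -, hθ⟩ : p ∈ (fun θ : ℝ => ‖Real.cos θ • f a + Real.sin θ • f b‖ ^ 2) ''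
      Set.uIcc 0 (Real.pi / 2) :=
    intermediate_value_uIcc (Continuous.continuousOn (by fun_prop)) (by simpa using hp)
  exact ⟨θ, hθ⟩

theorem IsParsevalFrame.exists_of_isTTransform [Fintype ι] (hf : IsParsevalFrame f) {w : ι → ℝ}
    (hw : IsTTransform (fun j => ‖f j‖ ^ 2) w a b) :
    ∃ g : ι → E, IsParsevalFrame g ∧ ∀ j, ‖g j‖ ^ 2 = w j := by
  obtain ⟨θ, hθ⟩ := exists_norm_sq_rotatePair_eq hw.ne hw.mem_uIcc
  refine ⟨_, hf.rotatePair θ hw.ne, fun j => ?_⟩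
  rcases eq_or_ne j a with rfl | ha
  · exact hθ
  rcases eq_or_ne j b with rfl | hb
  · have := norm_sq_rotatePair_add f θ hw.ne
    linarith [hw.add_eq]
  · rw [rotatePair_of_ne f θ ha hb, hw.eq_of_ne j ha hb]

theorem exists_isParsevalFrame_of_zero_or_one [Fintype ι] [FiniteDimensional ℝ E] {w : ι → ℝ}
    (hw : ∀ j, w j = 0 ∨ w j = 1) (hs : ∑ j, w j = Module.finrank ℝ E) :
    ∃ f : ι → E, IsParsevalFrame f ∧ ∀ j, ‖f j‖ ^ 2 = w j := by
  classical
  have hcard : Fintype.card {j // w j = 1} = Module.finrank ℝ E := by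
    have hw' : ∀ j, w j = if w j = 1 then 1 else 0 := fun j => by
      rcases hw j with h | h <;> simp [h]
    rw [Finset.sum_congr rfl fun j _ => hw' j, Finset.sum_boole] at hs
    rw [Fintype.card_subtype]
    exact_mod_cast hs
  let b : OrthonormalBasis {j // w j = 1} ℝ E :=
    (stdOrthonormalBasis ℝ E).reindex (Fintype.equivFinOfCardEq hcard).symm
  let f : ι → E := fun j => if h : w j = 1 then b ⟨j, h⟩ else 0
  refine ⟨f, fun x => ?_, fun j => ?_⟩
  · rw [← b.sum_sq_inner_right x]
    refine (Fintype.sum_of_injective _ Subtype.val_injective _ _ (fun j hj => ?_) fun j => ?_).symm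
    · have : w j ≠ 1 := by simpa using hj
      simp [f, this]
    · simp [f, j.2]
  · rcases hw j with h | h <;> simp [f, h]

theorem exists_isParsevalFrame_norm_sq_eq [Fintype ι] [FiniteDimensional ℝ E] {w : ι → ℝ}
    (hw : ∀ j, w j ∈ Set.Icc (0 : ℝ) 1) (hs : ∑ j, w j = Module.finrank ℝ E) :
    ∃ f : ι → E, IsParsevalFrame f ∧ ∀ j, ‖f j‖ ^ 2 = w j := by
  refine isTTransform_induction (m := Module.finrank ℝ E)
    (fun w hw hs => exists_isParsevalFrame_of_zero_or_one hw (mod_cast hs)) ?_ w hw (mod_cast hs)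
  rintro w' w a b hw'w ⟨f, hf, hfw'⟩
  obtain rfl : (fun j => ‖f j‖ ^ 2) = w' := funext hfw'
  exact hf.exists_of_isTTransform hw'w

end ParsevalFrame

section HatBox

theorem lintegral_comp_smul {E : Type*} [NormedAddCommGroup E] [NormedSpace ℝ E]
    [MeasurableSpace E] [BorelSpace E] [FiniteDimensional ℝ E] (μ : Measure E)
    [μ.IsAddHaarMeasure] (f : E → ENNReal) {r : ℝ} (hr : r ≠ 0) :
    ∫⁻ x, f (r • x) ∂μ =
      ENNReal.ofReal |(r ^ Module.finrank ℝ E)⁻¹| * ∫⁻ x, f x ∂μ := by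
  rw [← smul_eq_mul, ← lintegral_smul_measure, ← Measure.map_addHaar_smul μ hr,
    (measurableEmbedding_const_smul₀ hr).lintegral_map]

theorem volume_norm_sq_mem_Icc {F : Type*} [NormedAddCommGroup F] [InnerProductSpace ℝ F]
    [MeasurableSpace F] [BorelSpace F] [FiniteDimensional ℝ F] (hF : Module.finrank ℝ F = 2)
    {p : ℝ} (hp : 0 ≤ p) (q : ℝ) :
    volume {z : F | ‖z‖ ^ 2 ∈ Set.Icc p q} =
      ENNReal.ofReal (q - p) * volume (Metric.ball (0 : F) 1) := by
  have : Nontrivial F := Module.nontrivial_of_finrank_pos (R := ℝ) (by omega)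
  rcases lt_or_ge q p with hqp | hpq
  · simp [Set.Icc_eq_empty_of_lt hqp, ENNReal.ofReal_of_nonpos (sub_nonpos.2 hqp.le)]
  have hannulus : {z : F | ‖z‖ ^ 2 ∈ Set.Icc p q} =
      Metric.closedBall 0 (√q) \ Metric.ball 0 (√p) := by
    ext z
    simp [Real.le_sqrt (norm_nonneg z) (hp.trans hpq), Real.sqrt_le_left (norm_nonneg z),
      and_comm]
  have hball : Metric.ball (0 : F) (√p) ⊆ Metric.closedBall 0 (√q) :=
    (Metric.ball_subset_ball (Real.sqrt_le_sqrt hpq)).trans Metric.ball_subset_closedBall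
  rw [hannulus, measure_sdiff hball measurableSet_ball.nullMeasurableSet measure_ball_lt_top.ne,
    Measure.addHaar_closedBall _ _ (Real.sqrt_nonneg q),
    Measure.addHaar_ball _ _ (Real.sqrt_nonneg p), hF, Real.sq_sqrt hp,
    Real.sq_sqrt (hp.trans hpq), ENNReal.ofReal_sub _ hp,
    ENNReal.sub_mul fun _ _ => measure_ball_lt_top.ne]

variable {E : Type*} [NormedAddCommGroup E] [InnerProductSpace ℝ E]

theorem norm_starProjection_le_mul_iff (K : Submodule ℝ E) [K.HasOrthogonalProjection]
    {t : ℝ} (ht : 0 < t) (x : E) :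
    ‖K.starProjection x‖ ≤ t * ‖x‖ ∧ ‖x‖ ≤ 1 ↔
      ‖Kᗮ.starProjection x‖ ^ 2 ∈ Set.Icc
        (‖t⁻¹ • K.starProjection x‖ ^ 2 - ‖K.starProjection x‖ ^ 2)
        (1 - ‖K.starProjection x‖ ^ 2) := by
  have hx : ‖x‖ ^ 2 = ‖K.starProjection x‖ ^ 2 + ‖Kᗮ.starProjection x‖ ^ 2 := by
    simpa using K.norm_sq_eq_add_norm_sq_projection x
  rw [Set.mem_Icc, sub_le_iff_le_add', le_sub_iff_add_le', ← hx, sq_le_one_iff₀ (norm_nonneg x),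
    sq_le_sq₀ (norm_nonneg _) (norm_nonneg x), norm_smul, norm_inv, Real.norm_of_nonneg ht.le,
    inv_mul_le_iff₀ ht]

variable [FiniteDimensional ℝ E] [MeasurableSpace E] [BorelSpace E]

theorem volume_norm_starProjection_le (K : Submodule ℝ E) (hK : Module.finrank ℝ Kᗮ = 2) {t : ℝ}
    (ht0 : 0 < t) (ht1 : t ≤ 1) :
    volume {x | ‖K.starProjection x‖ ≤ t * ‖x‖ ∧ ‖x‖ ≤ 1} =
      ENNReal.ofReal (t ^ Module.finrank ℝ K) *
        ∫⁻ s : K, ENNReal.ofReal (1 - ‖s‖ ^ 2) * volume (Metric.ball (0 : Kᗮ) 1) := by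
  let T : Set (K × Kᗮ) :=
    {p | ‖t⁻¹ • p.1‖ ^ 2 - ‖p.1‖ ^ 2 ≤ ‖p.2‖ ^ 2} ∩ {p | ‖p.2‖ ^ 2 ≤ 1 - ‖p.1‖ ^ 2}
  have hT : MeasurableSet T := (measurableSet_le (by fun_prop) (by fun_prop)).inter
    (measurableSet_le (by fun_prop) (by fun_prop))
  have hdecomp : MeasurePreserving fun x : E => WithLp.ofLp (K.orthogonalDecomposition x) :=
    (WithLp.volume_preserving_ofLp _ _).comp K.orthogonalDecomposition.measurePreserving
  have hpre : {x | ‖K.starProjection x‖ ≤ t * ‖x‖ ∧ ‖x‖ ≤ 1} =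
      (fun x : E => WithLp.ofLp (K.orthogonalDecomposition x)) ⁻¹' T := by
    ext x
    refine (norm_starProjection_le_mul_iff K ht0 x).trans ?_
    simp [T]
  have hslice : ∀ s : K, volume (Prod.mk s ⁻¹' T) =
      ENNReal.ofReal (1 - ‖t⁻¹ • s‖ ^ 2) * volume (Metric.ball (0 : Kᗮ) 1) := fun s => by
    have hs : ‖s‖ ≤ ‖t⁻¹ • s‖ := by
      rw [norm_smul, norm_inv, Real.norm_of_nonneg ht0.le]
      exact le_mul_of_one_le_left (norm_nonneg s) ((one_le_inv₀ ht0).2 ht1)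
    have h0 : 0 ≤ ‖t⁻¹ • s‖ ^ 2 - ‖s‖ ^ 2 := sub_nonneg.2 (by gcongr)
    rw [← sub_sub_sub_cancel_right _ _ (‖s‖ ^ 2), ← volume_norm_sq_mem_Icc hK h0]
    rfl
  rw [hpre, hdecomp.measure_preimage hT.nullMeasurableSet, Measure.volume_eq_prod,
    Measure.prod_apply hT, lintegral_congr hslice,
    lintegral_comp_smul volume
      (fun s : K => ENNReal.ofReal (1 - ‖s‖ ^ 2) * volume (Metric.ball (0 : Kᗮ) 1))
      (inv_ne_zero ht0.ne'), inv_pow, inv_inv, abs_of_pos (pow_pos ht0 _)]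

variable (E) in
/-- The uniform distribution on the closed unit ball, used as a source of uniformly distributed
directions. -/
noncomputable def uniformUnitBall : Measure E :=
  ProbabilityTheory.cond volume (Metric.closedBall 0 1)

instance : IsProbabilityMeasure (uniformUnitBall E) :=
  ProbabilityTheory.cond_isProbabilityMeasure_of_finite
    (Metric.measure_closedBall_pos volume _ one_pos).ne' measure_closedBall_lt_top.ne

theorem uniformUnitBall_absolutelyContinuous : uniformUnitBall E ≪ volume :=
  ProbabilityTheory.cond_absolutelyContinuous

theorem uniformUnitBall_norm_starProjection_le_of_pos (K : Submodule ℝ E)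
    (hK : Module.finrank ℝ Kᗮ = 2) {t : ℝ} (ht0 : 0 < t) (ht1 : t ≤ 1) :
    uniformUnitBall E {x | ‖K.starProjection x‖ ≤ t * ‖x‖} =
      ENNReal.ofReal (t ^ Module.finrank ℝ K) := by
  have hball : volume (Metric.closedBall (0 : E) 1) =
      ∫⁻ s : K, ENNReal.ofReal (1 - ‖s‖ ^ 2) * volume (Metric.ball (0 : Kᗮ) 1) := by
    have := volume_norm_starProjection_le K hK one_pos le_rfl
    rw [one_pow, ENNReal.ofReal_one, one_mul] at this
    rw [← this]
    congr 1
    ext x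
    simpa using fun _ => K.norm_starProjection_apply_le x
  have hinter : Metric.closedBall (0 : E) 1 ∩ {x | ‖K.starProjection x‖ ≤ t * ‖x‖} =
      {x | ‖K.starProjection x‖ ≤ t * ‖x‖ ∧ ‖x‖ ≤ 1} := by
    ext x
    simp [and_comm]
  rw [uniformUnitBall, ProbabilityTheory.cond_apply measurableSet_closedBall, hinter,
    volume_norm_starProjection_le K hK ht0 ht1, ← hball, mul_left_comm,
    ENNReal.inv_mul_cancel (Metric.measure_closedBall_pos volume _ one_pos).ne'
      measure_closedBall_lt_top.ne, mul_one]

/-- **Archimedes' hat-box theorem**. It works in codimension two because there the annuli cut out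
by translates of `Kᗮ` have area proportional to `1 - ‖s / t‖ ^ 2`, a function of `s / t` only. -/
theorem uniformUnitBall_norm_starProjection_le (K : Submodule ℝ E)
    (hK : Module.finrank ℝ Kᗮ = 2) {t : ℝ} (ht : 0 ≤ t) :
    uniformUnitBall E {x | ‖K.starProjection x‖ ≤ t * ‖x‖} =
      ENNReal.ofReal (min 1 t ^ Module.finrank ℝ K) := by
  rcases ht.eq_or_lt with rfl | ht0
  · rcases eq_or_ne K ⊥ with rfl | hK0
    · simp
    have hker : {x | ‖K.starProjection x‖ ≤ 0 * ‖x‖} = (Kᗮ : Set E) := by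
      ext x
      simp [Submodule.starProjection_apply_eq_zero_iff]
    rw [min_eq_right zero_le_one, zero_pow (Submodule.finrank_eq_zero.not.2 hK0),
      ENNReal.ofReal_zero, hker]
    exact uniformUnitBall_absolutelyContinuous
      (Measure.addHaar_submodule _ _ (K.orthogonal_eq_top_iff.not.2 hK0))
  rcases le_total t 1 with ht1 | ht1
  · rw [min_eq_right ht1, uniformUnitBall_norm_starProjection_le_of_pos K hK ht0 ht1]
  · have huniv : {x | ‖K.starProjection x‖ ≤ t * ‖x‖} = Set.univ :=
      Set.eq_univ_of_forall fun x => (K.norm_starProjection_apply_le x).trans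
        (le_mul_of_one_le_left (norm_nonneg x) ht1)
    rw [huniv, measure_univ, min_eq_left ht1, one_pow, ENNReal.ofReal_one]

theorem uniformUnitBall_inner_sq_div_le (hE : Module.finrank ℝ E = 3) {y : E} (hy : y ≠ 0) {x : ℝ}
    (hx : 0 ≤ x) :
    uniformUnitBall E {z | inner ℝ y z ^ 2 / ‖z‖ ^ 2 ≤ x} =
      ENNReal.ofReal (min 1 (√(x / ‖y‖ ^ 2))) := by
  have hy' : 0 < ‖y‖ := norm_pos_iff.2 hy
  have hline : Module.finrank ℝ (ℝ ∙ y) = 1 := finrank_span_singleton hy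
  have hplane : Module.finrank ℝ (ℝ ∙ y)ᗮ = 2 := by
    have := (ℝ ∙ y).finrank_add_finrank_orthogonal
    omega
  have hset : {z | inner ℝ y z ^ 2 / ‖z‖ ^ 2 ≤ x} =
      {z | ‖(ℝ ∙ y).starProjection z‖ ≤ √(x / ‖y‖ ^ 2) * ‖z‖} := by
    ext z
    rcases eq_or_ne z 0 with rfl | hz
    · simpa using hx
    have hz' : 0 < ‖z‖ := norm_pos_iff.2 hz
    have hproj : ‖(ℝ ∙ y).starProjection z‖ = |inner ℝ y z| / ‖y‖ := by
      rw [Submodule.starProjection_singleton, norm_smul]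
      simp only [RCLike.ofReal_real_eq_id, id_eq, norm_div, norm_pow, Real.norm_eq_abs, abs_norm]
      field_simp
    simp only [Set.mem_ofPred_eq]
    rw [hproj, ← div_le_iff₀ hz', Real.le_sqrt (by positivity) (by positivity),
      div_pow, div_pow, sq_abs]
    field_simp
  rw [hset, uniformUnitBall_norm_starProjection_le _ hplane (Real.sqrt_nonneg _), hline, pow_one]

theorem exists_measure_sum_eq_one {ι : Type*} [Fintype ι] {w : ι → ℝ} (h0 : ∀ j, 0 < w j)
    (h1 : ∀ j, w j ≤ 1) (hs : ∑ j, w j = 3) :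
    ∃ μ : Measure (ι → ℝ), IsProbabilityMeasure μ ∧
      (∀ᵐ A ∂μ, (∀ j, 0 ≤ A j) ∧ ∑ j, A j = 1) ∧
      ∀ j, ∀ x : ℝ, 0 ≤ x → μ {A | A j ≤ x} = ENNReal.ofReal (min 1 (√(x / w j))) := by
  let S := EuclideanSpace ℝ (Fin 3)
  have hS : Module.finrank ℝ S = 3 := finrank_euclideanSpace_fin
  obtain ⟨f, hf, hfw⟩ : ∃ f : ι → S, IsParsevalFrame f ∧ ∀ j, ‖f j‖ ^ 2 = w j :=
    exists_isParsevalFrame_norm_sq_eq (fun j => ⟨(h0 j).le, h1 j⟩) (by rw [hs, hS]; norm_num)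
  have hfne : ∀ j, f j ≠ 0 := fun j hj => (h0 j).ne (by simp [← hfw, hj])
  let X : S → ι → ℝ := fun z j => inner ℝ (f j) z ^ 2 / ‖z‖ ^ 2
  have hX : Measurable X := by fun_prop
  have hne : ∀ᵐ z ∂uniformUnitBall S, z ≠ 0 :=
    uniformUnitBall_absolutelyContinuous.ae_le (Measure.ae_ne volume 0)
  refine ⟨(uniformUnitBall S).map X, Measure.isProbabilityMeasure_map hX.aemeasurable, ?_,
    fun j x hx => ?_⟩
  · rw [ae_map_iff hX.aemeasurable (by measurability)]
    filter_upwards [hne] with z hz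
    refine ⟨fun j => by positivity, ?_⟩
    rw [← Finset.sum_div, hf, div_self (pow_ne_zero 2 (norm_ne_zero_iff.2 hz))]
  · rw [Measure.map_apply hX (measurableSet_le (by fun_prop) (by fun_prop)), ← hfw j,
      ← uniformUnitBall_inner_sq_div_le hS (hfne j) hx]
    rfl

end HatBox

section WinShare

open Classical in
/-- The share of a battlefield that player `i` wins under the bids `x` on it: the battlefield is
split evenly among the highest bidders. -/
noncomputable def winShare {ι : Type*} [Fintype ι] (x : ι → ℝ) (i : ι) : ℝ :=
  if ∀ i', x i' ≤ x i then
    1 / ((Finset.univ.filter fun i' : ι => ∀ i'', x i'' ≤ x i').card : ℝ)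
  else 0

variable {ι : Type*} [Fintype ι]

theorem blottoPayoff_eq_sum_winShare {k n : ℕ} (v : Fin n → ℝ) (A : Fin k → Fin n → ℝ)
    (i : Fin k) : blottoPayoff v A i = ∑ j, v j * winShare (fun i' => A i' j) i := by
  simp only [blottoPayoff, winShare, mul_ite, mul_one_div, mul_zero]

theorem winShare_nonneg (x : ι → ℝ) (i : ι) : 0 ≤ winShare x i := by
  unfold winShare
  split_ifs <;> positivity

theorem winShare_le_indicator (x : ι → ℝ) (i : ι) :
    winShare x i ≤ {y : ι → ℝ | ∀ i', y i' ≤ y i}.indicator 1 x := by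
  classical
  by_cases hi : ∀ i', x i' ≤ x i
  · simp only [winShare, hi, implies_true, if_true, Set.indicator, Set.mem_ofPred_eq,
      Pi.one_apply]
    simpa only [one_div] using Nat.cast_inv_le_one _
  · simp [winShare, hi]

theorem winShare_le_one (x : ι → ℝ) (i : ι) : winShare x i ≤ 1 :=
  (winShare_le_indicator x i).trans (Set.indicator_apply_le' (fun _ => le_rfl) fun _ => zero_le_one)

theorem sum_winShare [Nonempty ι] (x : ι → ℝ) : ∑ i, winShare x i = 1 := by
  classical
  obtain ⟨m, hm⟩ := Finite.exists_max x
  have hcard : ((Finset.univ.filter fun i => ∀ i', x i' ≤ x i).card : ℝ) ≠ 0 :=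
    Nat.cast_ne_zero.2 (Finset.card_ne_zero.2 ⟨m, by simpa using hm⟩)
  simp only [winShare]
  rw [← Finset.sum_filter, Finset.sum_const, nsmul_eq_mul]
  exact mul_one_div_cancel hcard

theorem winShare_comp_equiv (x : ι → ℝ) (σ : ι ≃ ι) (i : ι) :
    winShare (x ∘ σ) i = winShare x (σ i) := by
  classical
  have hmax : ∀ i, (∀ i', (x ∘ σ) i' ≤ (x ∘ σ) i) ↔ ∀ i', x i' ≤ x (σ i) := fun i =>
    σ.forall_congr_left.trans (by simp)
  have hcard : (Finset.univ.filter fun i => ∀ i', x i' ≤ x (σ i)).card =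
      (Finset.univ.filter fun i => ∀ i', x i' ≤ x i).card :=
    Finset.card_equiv σ fun i => by simp only [Finset.mem_filter_univ]
  simp only [winShare, hmax, hcard]

theorem measurableSet_forall_le {ι : Type*} [Countable ι] (i : ι) :
    MeasurableSet {x : ι → ℝ | ∀ i', x i' ≤ x i} := by
  simp only [Set.ofPred_forall]
  exact .iInter fun i' => measurableSet_le (measurable_pi_apply i') (measurable_pi_apply i)

theorem measurable_winShare (i : ι) : Measurable fun x : ι → ℝ => winShare x i := by
  simp only [winShare, ← Finset.sum_boole]
  refine .ite (measurableSet_forall_le i) (measurable_const.div ?_) measurable_const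
  exact Finset.measurable_sum _ fun i' _ =>
    .ite (measurableSet_forall_le i') measurable_const measurable_const

theorem integrable_winShare (μ : Measure (ι → ℝ)) [IsFiniteMeasure μ] (i : ι) :
    Integrable (fun x => winShare x i) μ :=
  .of_mem_Icc 0 1 (measurable_winShare i).aemeasurable
    (ae_of_all _ fun x => ⟨winShare_nonneg x i, winShare_le_one x i⟩)

theorem integral_winShare_le (μ : Measure (ι → ℝ)) [IsFiniteMeasure μ] (i : ι) :
    ∫ x, winShare x i ∂μ ≤ μ.real {x | ∀ i', x i' ≤ x i} := by
  rw [← integral_indicator_one (measurableSet_forall_le i)]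
  exact integral_mono (integrable_winShare μ i)
    ((integrable_const 1).indicator (measurableSet_forall_le i)) (winShare_le_indicator · i)

theorem integral_winShare_pi_const [Nonempty ι] (μ : Measure ℝ) [IsProbabilityMeasure μ] (i : ι) :
    ∫ x, winShare x i ∂(Measure.pi fun _ => μ) = 1 / Fintype.card ι := by
  classical
  have hswap : ∀ i', ∫ x, winShare x i' ∂(Measure.pi fun _ => μ) =
      ∫ x, winShare x i ∂(Measure.pi fun _ => μ) := fun i' => by
    let e := MeasurableEquiv.piCongrLeft (fun _ : ι => ℝ) (Equiv.swap i i')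
    have he : MeasurePreserving e (Measure.pi fun _ => μ) (Measure.pi fun _ => μ) :=
      measurePreserving_piCongrLeft (fun _ => μ) (Equiv.swap i i')
    have hcomp : ∀ x, e x ∘ Equiv.swap i i' = x := fun x =>
      funext fun a =>
      Equiv.piCongrLeft_apply_apply (fun _ => ℝ) (Equiv.swap i i') x a
    rw [← he.integral_comp' fun x => winShare x i]
    refine integral_congr_ae (ae_of_all _ fun x => ?_)
    calc winShare x i' = winShare (e x ∘ Equiv.swap i i') i' := by rw [hcomp]
      _ = winShare (e x) i := by rw [winShare_comp_equiv, Equiv.swap_apply_right]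
  have htotal : ∑ i' : ι, ∫ x, winShare x i' ∂(Measure.pi fun _ => μ) = 1 := by
    rw [← integral_finsetSum _ fun i' _ => integrable_winShare _ i']
    simp [sum_winShare]
  rw [Finset.sum_congr rfl fun i' _ => hswap i', Finset.sum_const, nsmul_eq_mul] at htotal
  exact eq_one_div_of_mul_eq_one_right htotal

theorem pi_forall_le {k : ℕ} (P : Fin (k + 1) → Measure ℝ) [∀ i, SigmaFinite (P i)]
    (i₀ : Fin (k + 1)) :
    Measure.pi P {x | ∀ i, x i ≤ x i₀} = ∫⁻ b, ∏ i, P (i₀.succAbove i) (Set.Iic b) ∂P i₀ := by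
  let T : Set (ℝ × (Fin k → ℝ)) := {p | ∀ i, p.2 i ≤ p.1}
  have hT : MeasurableSet T := by
    simp only [T, Set.ofPred_forall]
    exact .iInter fun i => measurableSet_le (by fun_prop) (by fun_prop)
  have hpre : {x : Fin (k + 1) → ℝ | ∀ i, x i ≤ x i₀} =
      MeasurableEquiv.piFinSuccAbove (fun _ => ℝ) i₀ ⁻¹' T := by
    ext x
    simp only [Set.mem_ofPred_eq, Fin.forall_iff_succAbove i₀, le_refl, true_and]
    rfl
  rw [hpre, (measurePreserving_piFinSuccAbove P i₀).measure_preimage hT.nullMeasurableSet,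
    Measure.prod_apply hT]
  refine lintegral_congr fun b => ?_
  have hslice : Prod.mk b ⁻¹' T = Set.univ.pi fun _ => Set.Iic b := by
    ext x
    simp only [T, Set.mem_preimage, Set.mem_ofPred_eq, Set.mem_univ_pi, Set.mem_Iic]
  rw [hslice, Measure.pi_pi]

theorem measurable_measureReal_Iic (μ : Measure ℝ) [IsFiniteMeasure μ] :
    Measurable fun b => μ.real (Set.Iic b) :=
  Monotone.measurable fun _ _ hst => measureReal_mono (Set.Iic_subset_Iic.2 hst)

theorem integral_winShare_devFamily_le {k : ℕ} (i₀ : Fin (k + 1)) (μ ν : Measure ℝ)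
    [IsProbabilityMeasure μ] [IsProbabilityMeasure ν] :
    ∫ x, winShare x i₀ ∂(Measure.pi (devFamily i₀ μ ν)) ≤ ∫ b, μ.real (Set.Iic b) ^ k ∂ν := by
  have := devFamily_prob i₀ μ ν ‹_› ‹_›
  have hi : devFamily i₀ μ ν i₀ = ν := if_pos rfl
  have hs : ∀ i, devFamily i₀ μ ν (i₀.succAbove i) = μ := fun i => if_neg (Fin.succAbove_ne _ _)
  refine (integral_winShare_le _ i₀).trans_eq ?_
  rw [integral_eq_lintegral_of_nonneg_ae (ae_of_all _ fun b => by positivity)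
    ((measurable_measureReal_Iic μ).pow_const k).aestronglyMeasurable, measureReal_def,
    pi_forall_le]
  simp only [hi, hs, Finset.prod_const, Finset.card_univ, Fintype.card_fin]
  simp only [measureReal_def, ← ENNReal.toReal_pow, ne_eq, measure_ne_top, not_false_eq_true,
    ENNReal.pow_ne_top, ENNReal.ofReal_toReal]

end WinShare

section ExpectedPayoff

variable {k n : ℕ}

theorem expectedPayoff_eq_sum (v : Fin n → ℝ) (P : Fin k → Measure (Fin n → ℝ))
    (hP : ∀ i, IsProbabilityMeasure (P i)) (i : Fin k) :
    expectedPayoff v P hP i =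
      ∑ j, v j * ∫ x, winShare x i ∂(Measure.pi fun i' => (P i').map (Function.eval j)) := by
  have hmap : ∀ j, (Measure.pi fun i' => (P i').map (Function.eval j)) =
      (Measure.pi P).map fun A i' => A i' j := fun j =>
    (Measure.pi_map_pi fun i' => (measurable_pi_apply j).aemeasurable).symm
  have hmeas : ∀ j, Measurable fun (A : Fin k → Fin n → ℝ) i' => A i' j := fun j => by fun_prop
  have hint : ∀ j, Integrable (fun A : Fin k → Fin n → ℝ => winShare (fun i' => A i' j) i)
      (Measure.pi P) := fun j =>
    (integrable_winShare ((Measure.pi P).map _) i).comp_measurable (hmeas j)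
  simp only [expectedPayoff, blottoPayoff_eq_sum_winShare]
  rw [integral_finsetSum _ fun j _ => (hint j).const_mul _]
  refine Finset.sum_congr rfl fun j _ => ?_
  rw [integral_const_mul, hmap,
    integral_map (hmeas j).aemeasurable (measurable_winShare i).aestronglyMeasurable]

theorem expectedPayoff_const (v : Fin n → ℝ) (μ : Measure (Fin n → ℝ))
    (hμ : IsProbabilityMeasure μ) (i : Fin k) :
    expectedPayoff v (fun _ => μ) (fun _ => hμ) i = (∑ j, v j) / k := by
  have : NeZero k := ⟨i.pos.ne'⟩
  have hshare : ∀ j, ∫ x, winShare x i ∂(Measure.pi fun _ : Fin k => μ.map (Function.eval j)) =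
      1 / k := fun j => by
    have := Measure.isProbabilityMeasure_map (μ := μ) (measurable_pi_apply j).aemeasurable
    rw [integral_winShare_pi_const, Fintype.card_fin]
  simp only [expectedPayoff_eq_sum, hshare, mul_one_div, Finset.sum_div]

theorem devFamily_map {α β : Type*} [MeasurableSpace α] [MeasurableSpace β] (i₀ i : Fin k)
    (μ ν : Measure α) (f : α → β) :
    (devFamily i₀ μ ν i).map f = devFamily i₀ (μ.map f) (ν.map f) i :=
  apply_ite (Measure.map f) (i = i₀) ν μ

theorem expectedPayoff_devFamily_le_integral {v : Fin n → ℝ} (hv : ∀ j, 0 ≤ v j)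
    (μ ν : Measure (Fin n → ℝ)) (hμ : IsProbabilityMeasure μ) (hν : IsProbabilityMeasure ν)
    (i₀ : Fin (k + 1)) :
    expectedPayoff v (devFamily i₀ μ ν) (devFamily_prob i₀ μ ν hμ hν) i₀ ≤
      ∑ j, v j * ∫ b, μ.real {A | A j ≤ b j} ^ k ∂ν := by
  rw [expectedPayoff_eq_sum]
  refine Finset.sum_le_sum fun j _ => mul_le_mul_of_nonneg_left ?_ (hv j)
  have hj : Measurable (Function.eval j : (Fin n → ℝ) → ℝ) := measurable_pi_apply j
  have := Measure.isProbabilityMeasure_map (μ := μ) hj.aemeasurable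
  have := Measure.isProbabilityMeasure_map (μ := ν) hj.aemeasurable
  simp only [devFamily_map]
  refine (integral_winShare_devFamily_le i₀ _ _).trans_eq ?_
  rw [integral_map hj.aemeasurable
    ((measurable_measureReal_Iic _).pow_const k).aestronglyMeasurable]
  simp only [map_measureReal_apply hj measurableSet_Iic]
  rfl

theorem expectedPayoff_devFamily_le {v : Fin n → ℝ} (hv : ∀ j, 0 ≤ v j)
    {μ ν : Measure (Fin n → ℝ)} (hμ : IsProbabilityMeasure μ) (hν : IsProbabilityMeasure ν)
    {c : ℝ} (hc : 0 ≤ c) (hcdf : ∀ j x, 0 ≤ x → v j * μ.real {A | A j ≤ x} ^ k ≤ c * x)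
    (hbudget : ∀ᵐ b ∂ν, (∀ j, 0 ≤ b j) ∧ ∑ j, b j ≤ 1) (i₀ : Fin (k + 1)) :
    expectedPayoff v (devFamily i₀ μ ν) (devFamily_prob i₀ μ ν hμ hν) i₀ ≤ c := by
  have hmeas : ∀ j, Measurable fun b : Fin n → ℝ => μ.real {A | A j ≤ b j} := fun j =>
    (Monotone.measurable (f := fun x : ℝ => μ.real {A | A j ≤ x}) fun s t hst =>
      measureReal_mono fun A (hA : A j ≤ s) => hA.trans hst).comp (measurable_pi_apply j)
  have hint : ∀ j, Integrable (fun b : Fin n → ℝ => v j * μ.real {A | A j ≤ b j} ^ k) ν :=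
    fun j => Integrable.const_mul (.of_mem_Icc 0 1 ((hmeas j).pow_const k).aemeasurable
      (ae_of_all _ fun b => ⟨by positivity, pow_le_one₀ measureReal_nonneg measureReal_le_one⟩)) _
  have hpoint : ∀ᵐ b ∂ν, ∑ j, v j * μ.real {A | A j ≤ b j} ^ k ≤ c := by
    filter_upwards [hbudget] with b ⟨hb, hsum⟩
    calc ∑ j, v j * μ.real {A | A j ≤ b j} ^ k ≤ ∑ j, c * b j :=
          Finset.sum_le_sum fun j _ => hcdf j (b j) (hb j)
      _ = c * ∑ j, b j := (Finset.mul_sum ..).symm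
      _ ≤ c := mul_le_of_le_one_right hc hsum
  calc expectedPayoff v (devFamily i₀ μ ν) (devFamily_prob i₀ μ ν hμ hν) i₀
      ≤ ∑ j, v j * ∫ b, μ.real {A | A j ≤ b j} ^ k ∂ν :=
        expectedPayoff_devFamily_le_integral hv μ ν hμ hν i₀
    _ = ∫ b, ∑ j, v j * μ.real {A | A j ≤ b j} ^ k ∂ν := by
        simp only [integral_finsetSum _ fun j _ => hint j, integral_const_mul]
    _ ≤ ∫ _, c ∂ν := integral_mono_ae (integrable_finsetSum _ fun j _ => hint j)
        (integrable_const c) hpoint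
    _ = c := by simp

end ExpectedPayoff

theorem stmt5 (n : ℕ) (hn : 3 ≤ n) (v : Fin n → ℝ) (hv : ∀ j, 0 < v j)
    (hbound : ∀ j, v j ≤ (∑ l, v l) / 3) :
    ∃ (μ : Measure (Fin n → ℝ)) (hμ : IsProbabilityMeasure μ),
      (∀ᵐ A ∂μ, (∀ j, 0 ≤ A j) ∧ ∑ j, A j = 1) ∧
      (∀ j, ∀ x : ℝ, 0 ≤ x →
        μ {A : Fin n → ℝ | A j ≤ x} =
          ENNReal.ofReal (min 1 (Real.sqrt ((∑ l, v l) * x / (3 * v j))))) ∧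
      (∀ i₀ : Fin 3,
        (∀ (ν : Measure (Fin n → ℝ)) (hν : IsProbabilityMeasure ν),
          (∀ᵐ A ∂ν, (∀ j, 0 ≤ A j) ∧ ∑ j, A j ≤ 1) →
          expectedPayoff (k := 3) v (devFamily i₀ μ ν) (devFamily_prob i₀ μ ν hμ hν) i₀ ≤
            (∑ l, v l) / 3) ∧
        expectedPayoff (k := 3) v (fun _ => μ) (fun _ => hμ) i₀ = (∑ l, v l) / 3) := by
  set V := ∑ l, v l
  have hV : 0 < V := Finset.sum_pos (fun j _ => hv j) ⟨⟨0, by omega⟩, Finset.mem_univ _⟩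
  have hw : ∀ j, 0 < 3 * v j / V := fun j => by have := hv j; positivity
  have hw_le : ∀ j, 3 * v j / V ≤ 1 := fun j => by
    rw [div_le_one hV]
    linarith [hbound j]
  have hw_sum : ∑ j, 3 * v j / V = 3 := by
    rw [← Finset.sum_div, ← Finset.mul_sum, mul_div_cancel_right₀ 3 hV.ne']
  obtain ⟨μ, hμ, hsum, hcdf⟩ := exists_measure_sum_eq_one hw hw_le hw_sum
  simp only [div_div_eq_mul_div, mul_comm _ V] at hcdf
  refine ⟨μ, hμ, hsum, hcdf, fun i₀ => ⟨fun ν hν hbudget => ?_, expectedPayoff_const v μ hμ i₀⟩⟩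
  refine expectedPayoff_devFamily_le (fun j => (hv j).le) hμ hν (by positivity)
    (fun j x hx => ?_) hbudget i₀
  have hvj := hv j
  rw [measureReal_def, hcdf j x hx, ENNReal.toReal_ofReal (by positivity)]
  calc v j * min 1 √(V * x / (3 * v j)) ^ 2 ≤ v j * √(V * x / (3 * v j)) ^ 2 := by
        gcongr
        exact min_le_right _ _
    _ = V / 3 * x := by
        rw [Real.sq_sqrt (by positivity)]
        field_simp
end
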